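/- arXiv:2312.07107 — 4 statements merged into one kernel-verified Lean document; each statement's English description precedes it below -/
import Mathlib

section
/- Strong completeness: For any set of formulae F ⊆ Φ and any formula φ ∈ Φ, if F ⊬ φ, then there exist a game and a state w of that game such that w ⊨ f for each formula f ∈ F and w ⊭ φ. -/
/- Language: formulas over atomic propositions P, data variables V, actors 𝒜 = A.
   `bel T X φ` is B^T_X φ ; `str C T X φ` is [C]^T_X φ. -/
inductive Formula (P V A : Type) : Type
  | atom : P → Formula P V A
  | neg : Formula P V A → Formula P V A
  | imp : Formula P V A → Formula P V A → Formula P V A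
  | bel : Set V → Set V → Formula P V A → Formula P V A
  | str : Set A → Set V → Set V → Formula P V A → Formula P V A

variable {P V A : Type}

/-- Propositional tautologies: true under every valuation respecting ¬ and →. -/
def Tautology (φ : Formula P V A) : Prop :=
  ∀ v : Formula P V A → Prop,
    (∀ ψ, v (Formula.neg ψ) ↔ ¬ v ψ) →
    (∀ ψ χ, v (Formula.imp ψ χ) ↔ (v ψ → v χ)) →
    v φ

/-- Theorems of the logical system of doxastic strategies. -/
inductive Thm : Formula P V A → Prop
  | taut {φ : Formula P V A} : Tautology φ → Thm φ
  | truth {X : Set V} {φ : Formula P V A} :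
      Thm (Formula.imp (Formula.bel ∅ X φ) φ)
  | negIntro {T X : Set V} {φ : Formula P V A} :
      Thm (Formula.imp (Formula.neg (Formula.bel T X φ))
        (Formula.bel ∅ X (Formula.neg (Formula.bel T X φ))))
  | distrib {T X : Set V} {φ ψ : Formula P V A} :
      Thm (Formula.imp (Formula.bel T X (Formula.imp φ ψ))
        (Formula.imp (Formula.bel T X φ) (Formula.bel T X ψ)))
  | trust {T X Y : Set V} {φ : Formula P V A} :
      Thm (Formula.bel T X (Formula.imp (Formula.bel T Y φ) φ))
  | monoB {T T' X X' : Set V} {φ : Formula P V A} :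
      T ⊆ T' → X ⊆ X' →
      Thm (Formula.imp (Formula.bel T X φ) (Formula.bel T' X' φ))
  | monoS {C C' : Set A} {T T' X X' : Set V} {φ : Formula P V A} :
      T ⊆ T' → X ⊆ X' → C ⊆ C' →
      Thm (Formula.imp (Formula.str C T X φ) (Formula.str C' T' X' φ))
  | coop {C D : Set A} {T X : Set V} {φ ψ : Formula P V A} :
      C ∩ D = ∅ →
      Thm (Formula.imp (Formula.str C T X (Formula.imp φ ψ))
        (Formula.imp (Formula.str D T X φ) (Formula.str (C ∪ D) T X ψ)))
  | strIntro₁ {C : Set A} {T X : Set V} {φ : Formula P V A} :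
      Thm (Formula.imp (Formula.str C T X φ) (Formula.bel T X (Formula.str C T X φ)))
  | strIntro₂ {C : Set A} {T X : Set V} {φ : Formula P V A} :
      Thm (Formula.imp (Formula.bel T X (Formula.str C T X φ)) (Formula.str C T X φ))
  | unavoid {T X Y : Set V} {φ : Formula P V A} :
      Thm (Formula.imp (Formula.bel T X (Formula.str ∅ T Y φ)) (Formula.str ∅ T X φ))
  | pub {T : Set V} {φ : Formula P V A} :
      Thm (Formula.imp (Formula.bel T ∅ φ) (Formula.str ∅ T ∅ φ))
  | mp {φ ψ : Formula P V A} : Thm (Formula.imp φ ψ) → Thm φ → Thm ψ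
  | nec {φ : Formula P V A} : Thm φ → Thm (Formula.bel ∅ ∅ φ)

/-- `Deduces F φ`: φ is derivable from F together with the theorems using only Modus Ponens. -/
inductive Deduces (F : Set (Formula P V A)) : Formula P V A → Prop
  | thm {φ : Formula P V A} : Thm φ → Deduces F φ
  | mem {φ : Formula P V A} : φ ∈ F → Deduces F φ
  | mp {φ ψ : Formula P V A} :
      Deduces F (Formula.imp φ ψ) → Deduces F φ → Deduces F ψ

def Consistent (F : Set (Formula P V A)) : Prop :=
  ¬ ∃ φ : Formula P V A, Deduces F φ ∧ Deduces F (Formula.neg φ)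

def MaximalConsistent (F : Set (Formula P V A)) : Prop :=
  Consistent F ∧ ∀ G : Set (Formula P V A), Consistent G → F ⊆ G → F = G

/-- A game. -/
structure Game (P V A : Type) : Type 1 where
  W : Type
  sim : V → W → W → Prop
  sim_equiv : ∀ x : V, Equivalence (sim x)
  trust : W → Set V
  Δ : Type
  delta_nonempty : Nonempty Δ
  M : W → (A → Δ) → W → Prop
  pi : P → Set W

/-- `w ∼_X u`. -/
def Game.simSet (G : Game P V A) (X : Set V) (w u : G.W) : Prop :=
  ∀ x ∈ X, G.sim x w u

/-- The satisfaction relation `w ⊨ φ` (as `Sat G φ w`). -/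
def Sat (G : Game P V A) : Formula P V A → G.W → Prop
  | Formula.atom p, w => w ∈ G.pi p
  | Formula.neg φ, w => ¬ Sat G φ w
  | Formula.imp φ ψ, w => Sat G φ w → Sat G ψ w
  | Formula.bel T X φ, w =>
      ∀ u : G.W, G.simSet X w u → T ⊆ G.trust u → Sat G φ u
  | Formula.str C T X φ, w =>
      ∃ s : {a : A // a ∈ C} → G.Δ,
        ∀ (u v : G.W) (δ : A → G.Δ),
          G.simSet X w u → T ⊆ G.trust u →
          (∀ (a : A) (h : a ∈ C), s ⟨a, h⟩ = δ a) →
          G.M u δ v → T ⊆ G.trust v → Sat G φ v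

/- ===================== Canonical game ===================== -/

/-- One block `X_i, b_i, T_i, F_i` of a canonical state. -/
structure Block (P V A B : Type) where
  X : Set V
  b : B
  T : Set V
  F : Set (Formula P V A)

variable {B : Type}

/-- `F(w)`: the last set of formulae of the sequence (or `F0` for the root). -/
def cF (F0 : Set (Formula P V A)) (l : List (Block P V A B)) : Set (Formula P V A) :=
  l.getLast?.elim F0 Block.F

/-- `𝒯_w = T(w)`: the last dataset of the sequence (or `T0` for the root). -/
def cTrust (T0 : Set V) (l : List (Block P V A B)) : Set V :=
  l.getLast?.elim T0 Block.T

/-- Membership of a sequence in the set of canonical states `W`. -/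
inductive IsState (T0 : Set V) (F0 : Set (Formula P V A)) :
    List (Block P V A B) → Prop
  | nil :
      (∀ (Y : Set V) (ψ : Formula P V A),
        Formula.imp (Formula.bel T0 Y ψ) ψ ∈ F0) →
      IsState T0 F0 []
  | snoc {l : List (Block P V A B)} {bl : Block P V A B} :
      IsState T0 F0 l →
      MaximalConsistent bl.F →
      (∀ φ : Formula P V A, Formula.bel ∅ bl.X φ ∈ cF F0 l → φ ∈ bl.F) →
      (∀ (Y : Set V) (ψ : Formula P V A),
        Formula.imp (Formula.bel bl.T Y ψ) ψ ∈ bl.F) →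
      IsState T0 F0 (l ++ [bl])

/-- The canonical states. -/
def CState (T0 : Set V) (F0 : Set (Formula P V A)) (B : Type) : Type :=
  {l : List (Block P V A B) // IsState T0 F0 l}

attribute [local instance] Classical.propDecidable

/-- Length of the longest common prefix of two sequences. -/
noncomputable def cpl {α : Type} : List α → List α → Nat
  | a :: as, b :: bs => if a = b then cpl as bs + 1 else 0
  | _, _ => 0

/-- The blocks labelling the edges on the unique simple path between two
nodes of the canonical tree. -/
noncomputable def pathBlocks (w u : List (Block P V A B)) : List (Block P V A B) :=
  w.drop (cpl w u) ++ u.drop (cpl w u)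

/-- `w ∼_x u` in the canonical game: every edge along the unique simple path
between `w` and `u` is labelled with `x`. -/
def csimVar (x : V) (w u : List (Block P V A B)) : Prop :=
  ∀ bl ∈ pathBlocks w u, x ∈ bl.X

/-- `w ∼_X u` in the canonical game. -/
def csim (X : Set V) (w u : List (Block P V A B)) : Prop :=
  ∀ x ∈ X, csimVar x w u

/-- The canonical mechanism `M`. -/
def Mech (T0 : Set V) (F0 : Set (Formula P V A))
    (w : CState T0 F0 B) (δ : A → Formula P V A × CState T0 F0 B)
    (v : CState T0 F0 B) : Prop :=
  ∀ (C : Set A) (T X : Set V) (φ : Formula P V A),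
    Formula.str C T X φ ∈ cF F0 w.1 →
    (∀ a ∈ C, (δ a).1 = φ) →
    (∀ a ∈ C, csim X w.1 (δ a).2.1) →
    T ⊆ cTrust T0 w.1 → T ⊆ cTrust T0 v.1 →
    φ ∈ cF F0 v.1

/-- Satisfaction `w ⊨ φ` on the canonical game (as `CSat T0 F0 φ w`). -/
def CSat (T0 : Set V) (F0 : Set (Formula P V A)) :
    Formula P V A → CState T0 F0 B → Prop
  | Formula.atom p, w => Formula.atom p ∈ cF F0 w.1
  | Formula.neg φ, w => ¬ CSat T0 F0 φ w
  | Formula.imp φ ψ, w => CSat T0 F0 φ w → CSat T0 F0 ψ w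
  | Formula.bel T X φ, w =>
      ∀ u : CState T0 F0 B, csim X w.1 u.1 → T ⊆ cTrust T0 u.1 → CSat T0 F0 φ u
  | Formula.str C T X φ, w =>
      ∃ s : {a : A // a ∈ C} → Formula P V A × CState T0 F0 B,
        ∀ (u v : CState T0 F0 B) (δ : A → Formula P V A × CState T0 F0 B),
          csim X w.1 u.1 → T ⊆ cTrust T0 u.1 →
          (∀ (a : A) (h : a ∈ C), s ⟨a, h⟩ = δ a) →
          Mech T0 F0 u δ v → T ⊆ cTrust T0 v.1 → CSat T0 F0 φ v

/- ===================== Harmony ===================== -/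

/-- Conjunction definable from ¬ and →. -/
def fand (φ ψ : Formula P V A) : Formula P V A :=
  Formula.neg (Formula.imp φ (Formula.neg ψ))

/-- A canonical tautology (verum). -/
noncomputable def verum (P V A : Type) [Nonempty (Formula P V A)] : Formula P V A :=
  Formula.imp (Classical.arbitrary (Formula P V A)) (Classical.arbitrary (Formula P V A))

/-- Conjunction of a finite list of formulae. -/
noncomputable def conjList [Nonempty (Formula P V A)] :
    List (Formula P V A) → Formula P V A
  | [] => verum P V A
  | φ :: l => fand φ (conjList l)

/-- The pair `(F, G)` is in `T`-harmony: `F ⊬ [∅]^T_V ¬⋀G'` for each finite `G' ⊆ G`. -/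
def THarmony [Nonempty (Formula P V A)] (T : Set V)
    (F G : Set (Formula P V A)) : Prop :=
  ∀ l : List (Formula P V A), (∀ ψ ∈ l, ψ ∈ G) →
    ¬ Deduces F (Formula.str ∅ T (Set.univ : Set V) (Formula.neg (conjList l)))

namespace SC

open Formula

theorem ded_mono {F G : Set (Formula P V A)} (hFG : F ⊆ G) {a : Formula P V A}
    (h : Deduces F a) : Deduces G a := by
  induction h with
  | thm h => exact .thm h
  | mem h => exact .mem (hFG h)
  | mp _ _ h1 h2 => exact .mp h1 h2

theorem ded_imp {F : Set (Formula P V A)} {a b : Formula P V A}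
    (h : Deduces (insert a F) b) : Deduces F (imp a b) := by
  induction h with
  | @thm c h =>
    refine .mp (.thm (.taut ?_)) (.thm h)
    intro v hn hi; simp only [hi]; tauto
  | @mem c h =>
    rcases h with h | h
    · subst h
      refine .thm (.taut ?_)
      intro v hn hi; simp only [hi]; tauto
    · refine .mp (.thm (.taut ?_)) (.mem h)
      intro v hn hi; simp only [hi]; tauto
  | @mp c d _ _ h1 h2 =>
    refine .mp (.mp (.thm (.taut ?_)) h1) h2
    intro v hn hi; simp only [hi]; tauto

theorem ded_fin {K S : Set (Formula P V A)} {a : Formula P V A}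
    (h : Deduces (K ∪ S) a) :
    ∃ t : Finset (Formula P V A), (t : Set (Formula P V A)) ⊆ S ∧ Deduces (K ∪ t) a := by
  induction h with
  | thm h => exact ⟨∅, by simp, .thm h⟩
  | @mem c h =>
    rcases h with h | h
    · exact ⟨∅, by simp, .mem (Or.inl h)⟩
    · exact ⟨{c}, by simpa using h, .mem (Or.inr (by simp))⟩
  | mp _ _ h1 h2 =>
    obtain ⟨t1, ht1, d1⟩ := h1
    obtain ⟨t2, ht2, d2⟩ := h2
    refine ⟨t1 ∪ t2, by simp [ht1, ht2], .mp (ded_mono ?_ d1) (ded_mono ?_ d2)⟩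
    · intro x hx; simp at hx ⊢; tauto
    · intro x hx; simp at hx ⊢; tauto

/-- Maximal consistent sets, in closure form. -/
structure MCS (S : Set (Formula P V A)) : Prop where
  closed : ∀ a, Deduces S a → a ∈ S
  neg_iff : ∀ a, neg a ∈ S ↔ a ∉ S

theorem lindenbaum {F : Set (Formula P V A)} {a : Formula P V A} (h : ¬ Deduces F a) :
    ∃ S, F ⊆ S ∧ MCS S ∧ a ∉ S := by
  obtain ⟨S, hFS, hS⟩ := zorn_subset_nonempty {S : Set (Formula P V A) | ¬ Deduces S a} (by
    intro c hc hch hne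
    refine ⟨⋃₀ c, ?_, fun s hs => Set.subset_sUnion_of_mem hs⟩
    intro hd
    have hd' : Deduces (∅ ∪ ⋃₀ c) a := by simpa using hd
    obtain ⟨t, ht, hd⟩ := ded_fin hd'
    obtain ⟨s, hs, hts⟩ := DirectedOn.exists_mem_subset_of_finset_subset_biUnion
      (f := id) hne (hch.directedOn) (s := t) (by simpa [Set.sUnion_eq_biUnion] using ht)
    exact hc hs (ded_mono (by simpa using hts) hd)) F h
  have hnot : ¬ Deduces S a := hS.1
  have key : ∀ b, b ∉ S → Deduces S (imp b a) := by
    intro b hb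
    apply ded_imp
    by_contra hcon
    exact hb (hS.2 hcon (Set.subset_insert _ _) (Set.mem_insert _ _))
  refine ⟨S, hFS, ⟨?_, ?_⟩, fun h => hnot (.mem h)⟩
  · intro b hb
    by_contra hcon
    exact hnot (.mp (key b hcon) hb)
  · intro b
    constructor
    · intro h1 h2
      refine hnot (.mp (.mp (.thm (.taut ?_)) (.mem h1)) (.mem h2))
      intro v hn hi; simp only [hi, hn]; tauto
    · intro hb
      by_contra hcon
      refine hnot (.mp (.mp (.thm (.taut ?_)) (key _ hb)) (key _ hcon))
      intro v hn hi; simp only [hi, hn]; tauto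

theorem MCS.thm {S : Set (Formula P V A)} (h : MCS S) {a} (ha : Thm a) : a ∈ S :=
  h.closed _ (.thm ha)

theorem MCS.mp {S : Set (Formula P V A)} (h : MCS S) {a b} (hab : imp a b ∈ S) (ha : a ∈ S) :
    b ∈ S := h.closed _ (.mp (.mem hab) (.mem ha))

theorem MCS.tmp {S : Set (Formula P V A)} (h : MCS S) {a b} (hab : Thm (imp a b)) (ha : a ∈ S) :
    b ∈ S := h.mp (h.thm hab) ha

theorem MCS.imp_iff {S : Set (Formula P V A)} (h : MCS S) {a b} :
    imp a b ∈ S ↔ (a ∈ S → b ∈ S) := by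
  constructor
  · exact fun hab ha => h.mp hab ha
  · intro hab
    by_cases ha : a ∈ S
    · refine h.tmp (.taut ?_) (hab ha)
      intro v hn hi; simp only [hi]; tauto
    · refine h.tmp (.taut ?_) ((h.neg_iff a).2 ha)
      intro v hn hi; simp only [hi, hn]; tauto

theorem nec' {T X : Set V} {a : Formula P V A} (h : Thm a) : Thm (bel T X a) :=
  .mp (.monoB (Set.empty_subset _) (Set.empty_subset _)) (.nec h)

theorem snec {T X : Set V} {a : Formula P V A} (h : Thm a) : Thm (str ∅ T X a) :=
  .mp (.monoS (Set.empty_subset _) (Set.empty_subset _) le_rfl) (.mp .pub (.nec h))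

theorem coop0 {T X : Set V} {a b : Formula P V A} :
    Thm (imp (str ∅ T X (imp a b)) (imp (str ∅ T X a) (str ∅ T X b))) := by
  have := Thm.coop (C := (∅ : Set A)) (D := ∅) (T := T) (X := X) (φ := a) (ψ := b) (by simp)
  simpa using this

theorem smono {T X : Set V} {a b : Formula P V A} (h : Thm (imp a b)) :
    Thm (imp (str ∅ T X a) (str ∅ T X b)) := .mp coop0 (snec h)

theorem bmono {T X : Set V} {a b : Formula P V A} (h : Thm (imp a b)) :
    Thm (imp (bel T X a) (bel T X b)) := .mp .distrib (nec' h)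

theorem syl {a b c : Formula P V A} (h1 : Thm (imp a b)) (h2 : Thm (imp b c)) :
    Thm (imp a c) := by
  refine .mp (.mp (.taut ?_) h1) h2
  intro v hn hi; simp only [hi]; tauto

theorem posIntro {T X : Set V} {a : Formula P V A} :
    Thm (imp (bel T X a) (bel ∅ X (bel T X a))) := by
  have h1 : Thm (imp (bel T X a) (neg (bel ∅ X (neg (bel T X a))))) := by
    refine .mp (.taut ?_) (Thm.truth (X := X) (φ := neg (bel T X a)))
    intro v hn hi; simp only [hi, hn]; tauto
  have h2 : Thm (imp (neg (bel ∅ X (neg (bel T X a)))) (bel T X a)) := by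
    refine .mp (.taut ?_) (Thm.negIntro (T := T) (X := X) (φ := a))
    intro v hn hi; simp only [hi, hn]; tauto
  exact syl h1 (syl .negIntro (bmono h2))

theorem ded_bel {S K : Set (Formula P V A)} (hS : MCS S) {T X : Set V} {a}
    (hK : ∀ k ∈ K, bel T X k ∈ S) (h : Deduces K a) : bel T X a ∈ S := by
  induction h with
  | thm h => exact hS.thm (nec' h)
  | mem h => exact hK _ h
  | mp _ _ h1 h2 => exact hS.mp (hS.tmp .distrib h1) h2

theorem ded_str {S K : Set (Formula P V A)} (hS : MCS S) {T X : Set V} {a}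
    (hK : ∀ k ∈ K, str ∅ T X k ∈ S) (h : Deduces K a) : str ∅ T X a ∈ S := by
  induction h with
  | thm h => exact hS.thm (snec h)
  | mem h => exact hK _ h
  | mp _ _ h1 h2 => exact hS.mp (hS.tmp coop0 h1) h2

/-- Combining commitments of disjoint groups of actors. -/
theorem combine {S : Set (Formula P V A)} (hS : MCS S) {T X : Set V} {C : Set A}
    (f : A → Formula P V A) (t : Finset (Formula P V A))
    (ht : ∀ c ∈ t, ∃ D ⊆ C, str D T X c ∈ S ∧ ∀ a ∈ D, f a = c) :
    ∀ θ, Deduces ({c | str ∅ T X c ∈ S} ∪ t) θ →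
      ∃ E ⊆ {a | a ∈ C ∧ f a ∈ t}, str E T X θ ∈ S := by
  induction t using Finset.induction_on with
  | empty =>
    intro θ h
    exact ⟨∅, Set.empty_subset _, ded_str hS (fun k hk => by simpa using hk) h⟩
  | insert c t hc ih =>
    intro θ h
    have h' : Deduces ({c | str ∅ T X c ∈ S} ∪ t) (imp c θ) := by
      apply ded_imp
      refine ded_mono ?_ h
      intro x hx; simp at hx ⊢; tauto
    obtain ⟨E, hE, hE'⟩ := ih (fun d hd => ht d (Finset.mem_insert_of_mem hd)) _ h'
    obtain ⟨D, hDC, hD, hDf⟩ := ht c (Finset.mem_insert_self _ _)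
    refine ⟨E ∪ D, ?_, hS.mp (hS.tmp (.coop ?_) hE') hD⟩
    · rintro a (ha | ha)
      · exact ⟨(hE ha).1, Finset.mem_insert_of_mem (hE ha).2⟩
      · exact ⟨hDC ha, by rw [hDf a ha]; exact Finset.mem_insert_self _ _⟩
    · ext a
      simp only [Set.mem_inter_iff, Set.mem_empty_iff_false, iff_false, not_and]
      intro ha ha'
      have := (hE ha).2
      rw [hDf a ha'] at this
      exact hc this

theorem harmony {F0 G : Set (Formula P V A)} (hG : MCS G) {T X : Set V}
    (hb : ∀ θ, Deduces F0 (str ∅ T X θ) → θ ∈ G)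
    (t : Finset (Formula P V A)) (ht : ∀ c ∈ t, ∃ g ∈ G, c = neg (str ∅ T X (neg g))) :
    ∀ θ, Deduces (F0 ∪ t) (str ∅ T X θ) → θ ∈ G := by
  induction t using Finset.induction_on with
  | empty => intro θ h; exact hb θ (by simpa using h)
  | insert c t hc ih =>
    intro θ h
    obtain ⟨g, hg, rfl⟩ := ht c (Finset.mem_insert_self _ _)
    have h' : Deduces (F0 ∪ t) (imp (neg (str ∅ T X (neg g))) (str ∅ T X θ)) := by
      apply ded_imp
      refine ded_mono ?_ h
      intro x hx; simp at hx ⊢; tauto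
    have h1 : Thm (imp (str ∅ T X (neg g)) (str ∅ T X (imp g θ))) := by
      refine smono (.taut ?_)
      intro v hn hi; simp only [hi, hn]; tauto
    have h2 : Thm (imp (str ∅ T X θ) (str ∅ T X (imp g θ))) := by
      refine smono (.taut ?_)
      intro v hn hi; simp only [hi]; tauto
    refine hG.mp (ih (fun d hd => ht d (Finset.mem_insert_of_mem hd)) (imp g θ) ?_) hg
    refine .mp (.mp (.mp (.thm (.taut ?_)) (.thm h1)) (.thm h2)) h'
    intro v hn hi; simp only [hi, hn]; tauto

/-- Blocks of our canonical game; states are lists with the most recent block first. -/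
abbrev Blk (P V A : Type) := Block P V A (Set A)

def Fof (R : Set (Formula P V A)) : List (Blk P V A) → Set (Formula P V A)
  | [] => R
  | b :: _ => b.F

def Tof : List (Blk P V A) → Set V
  | [] => ∅
  | b :: _ => b.T

def Ok (R : Set (Formula P V A)) : List (Blk P V A) → Prop
  | [] => True
  | b :: l => Ok R l ∧ MCS b.F ∧ (∀ a, bel ∅ b.X a ∈ Fof R l → a ∈ b.F) ∧
      ∀ Y a, bel b.T Y a ∈ b.F → a ∈ b.F

noncomputable def top (x : V) : List (Blk P V A) → List (Blk P V A)
  | [] => []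
  | b :: l => if x ∈ b.X then top x l else b :: l

theorem top_suffix (x : V) (l : List (Blk P V A)) : top x l <:+ l := by
  induction l with
  | nil => exact List.suffix_rfl
  | cons b l ih =>
    unfold top
    split_ifs
    · exact ih.trans (List.suffix_cons _ _)
    · exact List.suffix_rfl

noncomputable def cgame (R : Set (Formula P V A)) : Game P V A where
  W := {l : List (Blk P V A) // Ok R l}
  sim x w u := top x w.1 = top x u.1
  sim_equiv x := ⟨fun _ => rfl, fun h => h.symm, fun h1 h2 => h1.trans h2⟩
  trust w := Tof w.1
  Δ := Option (Formula P V A × {l : List (Blk P V A) // Ok R l})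
  delta_nonempty := ⟨none⟩
  M w δ v := ∀ (C : Set A) (T X : Set V) (a : Formula P V A),
    str C T X a ∈ Fof R w.1 →
    (∀ i ∈ C, ∃ q : {l : List (Blk P V A) // Ok R l}, δ i = some (a, q) ∧
      ∀ x ∈ X, top x w.1 = top x q.1) →
    T ⊆ Tof w.1 → T ⊆ Tof v.1 → a ∈ Fof R v.1
  pi p := {w | atom p ∈ Fof R w.1}

theorem Fof_mcs {R : Set (Formula P V A)} (hR : MCS R) {l : List (Blk P V A)} (hl : Ok R l) :
    MCS (Fof R l) := by
  cases l with
  | nil => exact hR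
  | cons b l => exact hl.2.1

theorem Fof_trust {R : Set (Formula P V A)} (hR : MCS R) {l : List (Blk P V A)} (hl : Ok R l)
    {Y : Set V} {a} (h : bel (Tof l) Y a ∈ Fof R l) : a ∈ Fof R l := by
  cases l with
  | nil => exact hR.tmp .truth h
  | cons b l => exact hl.2.2.2 Y a h

theorem edge {R : Set (Formula P V A)} (hR : MCS R) {b : Blk P V A} {l : List (Blk P V A)}
    (hl : Ok R (b :: l)) {T X : Set V} (hX : X ⊆ b.X) {a : Formula P V A} :
    bel T X a ∈ Fof R l ↔ bel T X a ∈ Fof R (b :: l) := by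
  have h1 := Fof_mcs hR hl.1
  have h2 := Fof_mcs hR hl
  constructor
  · intro h
    exact hl.2.2.1 _ (h1.tmp (.monoB le_rfl hX) (h1.tmp posIntro h))
  · intro h
    by_contra hcon
    have := h1.tmp .negIntro ((h1.neg_iff _).2 hcon)
    exact (h2.neg_iff _).1 (hl.2.2.1 _ (h1.tmp (.monoB le_rfl hX) this)) h

theorem agree {R : Set (Formula P V A)} (hR : MCS R) {T X : Set V} {a : Formula P V A} :
    ∀ (n : ℕ) (w u : List (Blk P V A)), w.length + u.length = n → Ok R w → Ok R u →
      (∀ x ∈ X, top x w = top x u) → (bel T X a ∈ Fof R w ↔ bel T X a ∈ Fof R u) := by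
  have strip : ∀ w : List (Blk P V A), (∃ b l, w = b :: l ∧ X ⊆ b.X) ∨ w = [] ∨
      ∃ x ∈ X, top x w = w := by
    intro w
    cases w with
    | nil => exact .inr (.inl rfl)
    | cons b l =>
      by_cases h : X ⊆ b.X
      · exact .inl ⟨b, l, rfl, h⟩
      · obtain ⟨x, hx, hxb⟩ := Set.not_subset.1 h
        exact .inr (.inr ⟨x, hx, by simp [top, hxb]⟩)
  intro n
  induction n using Nat.strong_induction_on with
  | _ n ih =>
  intro w u hn hw hu hs
  rcases strip w with ⟨b, l, rfl, hb⟩ | hw'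
  · rw [← edge hR hw hb]
    refine ih _ ?_ l u rfl hw.1 hu ?_
    · simp at hn; omega
    · intro x hx
      rw [← hs x hx]; simp [top, hb hx]
  rcases strip u with ⟨b, l, rfl, hb⟩ | hu'
  · rw [← edge hR hu hb]
    refine ih _ ?_ w l rfl hw hu.1 ?_
    · simp at hn; omega
    · intro x hx
      rw [hs x hx]; simp [top, hb hx]
  have hwu : w <:+ u := by
    rcases hw' with rfl | ⟨x, hx, h⟩
    · exact List.nil_suffix
    · rw [← h, hs x hx]; exact top_suffix _ _
  have huw : u <:+ w := by
    rcases hu' with rfl | ⟨x, hx, h⟩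
    · exact List.nil_suffix
    · rw [← h, ← hs x hx]; exact top_suffix _ _
  rw [hwu.eq_of_length_le huw.length_le]

theorem agree' {R : Set (Formula P V A)} (hR : MCS R) {T X : Set V} {a : Formula P V A}
    {w u : List (Blk P V A)} (hw : Ok R w) (hu : Ok R u) (h : ∀ x ∈ X, top x w = top x u) :
    bel T X a ∈ Fof R w ↔ bel T X a ∈ Fof R u :=
  agree hR _ w u rfl hw hu h

/-- A new child carrying any maximal extension of the `T,X`-beliefs is a legal state. -/
theorem child_ok {R : Set (Formula P V A)} (hR : MCS R) {w : List (Blk P V A)} (hw : Ok R w)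
    {T X : Set V} {S : Set (Formula P V A)} (hS : MCS S)
    (hsub : {a | bel T X a ∈ Fof R w} ⊆ S) (b : Set A) :
    Ok R ((⟨X, b, T, S⟩ : Blk P V A) :: w) := by
  have hm := Fof_mcs hR hw
  refine ⟨hw, hS, ?_, ?_⟩
  · intro a ha
    exact hsub (hm.tmp (.monoB (Set.empty_subset _) le_rfl) ha)
  · intro Y a ha
    exact hS.mp (hsub (hm.thm .trust)) ha

theorem bel_exists {R : Set (Formula P V A)} (hR : MCS R) {w : List (Blk P V A)} (hw : Ok R w)
    {T X : Set V} {a : Formula P V A} (h : bel T X a ∉ Fof R w) :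
    ∃ S, MCS S ∧ {a | bel T X a ∈ Fof R w} ⊆ S ∧ a ∉ S := by
  obtain ⟨S, h1, h2, h3⟩ := lindenbaum (F := {a | bel T X a ∈ Fof R w}) (a := a)
    (fun hd => h (ded_bel (Fof_mcs hR hw) (fun k hk => hk) hd))
  exact ⟨S, h2, h1, h3⟩

theorem top_child {w : List (Blk P V A)} {b : Blk P V A} {x : V} (hx : x ∈ b.X) :
    top x w = top x (b :: w) := by simp [top, hx]

/-- The key step: a coalition without a syntactic strategy has none semantically. -/
theorem str_exists {R : Set (Formula P V A)} (hR : MCS R) {w : List (Blk P V A)} (hw : Ok R w)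
    {C : Set A} {T X : Set V} {a : Formula P V A} (h : str C T X a ∉ Fof R w)
    (f : A → Formula P V A) :
    ∃ S G, MCS S ∧ MCS G ∧ {a | bel T X a ∈ Fof R w} ⊆ S ∧ a ∉ G ∧
      (∀ c, str ∅ T Set.univ c ∈ S → c ∈ G) ∧
      (∀ D ⊆ C, ∀ c, str D T X c ∈ Fof R w → (∀ i ∈ D, f i = c) → c ∈ G) := by
  have hm := Fof_mcs hR hw
  obtain ⟨G, hG1, hG, haG⟩ := lindenbaum (F := {c | str ∅ T X c ∈ Fof R w} ∪
      {c | ∃ D ⊆ C, str D T X c ∈ Fof R w ∧ ∀ i ∈ D, f i = c}) (a := a) (by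
    intro hd
    obtain ⟨t, ht, hd⟩ := ded_fin hd
    obtain ⟨E, hE, hE'⟩ := combine hm f t (fun c hc => ht hc) a hd
    exact h (hm.tmp (.monoS le_rfl le_rfl (fun i hi => (hE hi).1)) hE'))
  have hb : ∀ θ, Deduces {a | bel T X a ∈ Fof R w} (str ∅ T Set.univ θ) → θ ∈ G := by
    intro θ hd
    exact hG1 (Or.inl (hm.tmp .unavoid (ded_bel hm (fun k hk => hk) hd)))
  obtain ⟨S, hS1, hS, -⟩ := lindenbaum (F := {a | bel T X a ∈ Fof R w} ∪
      {c | ∃ g ∈ G, c = neg (str ∅ T Set.univ (neg g))}) (a := str ∅ T Set.univ a) (by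
    intro hd
    obtain ⟨t, ht, hd⟩ := ded_fin hd
    exact haG (harmony hG hb t (fun c hc => ht hc) _ hd))
  refine ⟨S, G, hS, hG, fun x hx => hS1 (Or.inl hx), haG, ?_, ?_⟩
  · intro c hc
    by_contra hcon
    have h1 := hS1 (Or.inr ⟨neg c, (hG.neg_iff c).2 hcon, rfl⟩)
    refine (hS.neg_iff _).1 h1 (hS.tmp (smono (.taut ?_)) hc)
    intro v hn hi; simp only [hi, hn]; tauto
  · intro D hD c hc hf
    exact hG1 (Or.inr ⟨D, hD, hc, hf⟩)

theorem truth_lemma {R : Set (Formula P V A)} (hR : MCS R) (a : Formula P V A) :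
    ∀ w : (cgame R).W, Sat (cgame R) a w ↔ a ∈ Fof R w.1 := by
  induction a with
  | atom p => intro w; exact Iff.rfl
  | neg a ih =>
    intro w
    rw [(Fof_mcs hR w.2).neg_iff, ← ih w]; rfl
  | imp a b iha ihb =>
    intro w
    rw [(Fof_mcs hR w.2).imp_iff, ← iha w, ← ihb w]; rfl
  | bel T X a ih =>
    intro w
    constructor
    · intro h
      by_contra hcon
      obtain ⟨S, hS, hsub, haS⟩ := bel_exists hR w.2 hcon
      have hok := child_ok hR w.2 hS hsub ∅
      refine haS ((ih ⟨_, hok⟩).1 (h ⟨_, hok⟩ ?_ ?_))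
      · intro x hx
        exact top_child hx
      · exact le_rfl
    · intro h u hsim hT
      rw [ih]
      have hu := (agree' hR w.2 u.2 hsim).1 h
      exact Fof_trust hR u.2 ((Fof_mcs hR u.2).tmp (.monoB hT le_rfl) hu)
  | str C T X a ih =>
    intro w
    have hm := Fof_mcs hR w.2
    constructor
    · rintro ⟨s, hs⟩
      by_contra hcon
      let δ : A → Option (Formula P V A × {l : List (Blk P V A) // Ok R l}) :=
        fun i => if h : i ∈ C then s ⟨i, h⟩ else none
      have hδ : ∀ (i : A) (h : i ∈ C), s ⟨i, h⟩ = δ i := by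
        intro i h; simp [δ, h]
      let f : A → Formula P V A := fun i => (δ i).elim a Prod.fst
      obtain ⟨S, G, hS, hG, hsub, haG, h1, h2⟩ := str_exists hR w.2 hcon f
      -- choose a fresh index
      obtain ⟨b, hb⟩ : ∃ b : Set A, ∀ i c q, δ i = some (c, q) →
          ¬ ((⟨X, b, T, S⟩ : Blk P V A) :: w.1) <:+ q.1 := by
        by_contra hno
        push Not at hno
        choose g c q hq hsuf using hno
        refine Function.cantor_injective g ?_
        intro b b' hbb
        have e : q b = q b' := by
          have := (hq b).symm.trans ((congrArg δ hbb).trans (hq b'))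
          simp at this; exact this.2
        have hs1 := hsuf b
        have hs2 := hsuf b'
        rw [e] at hs1
        have := List.suffix_of_suffix_length_le hs1 hs2 (by simp)
        have := this.eq_of_length (by simp)
        simp at this; exact this
      have hok := child_ok hR w.2 hS hsub b
      have hGsub : {c | bel T ∅ c ∈ Fof R ((⟨X, b, T, S⟩ : Blk P V A) :: w.1)} ⊆ G := by
        intro c hc
        exact h1 c (hS.tmp (.monoS le_rfl (Set.empty_subset _) le_rfl) (hS.tmp .pub hc))
      have hok2 := child_ok hR hok hG hGsub ∅
      refine haG ((ih ⟨_, hok2⟩).1 (hs ⟨_, hok⟩ ⟨_, hok2⟩ δ ?_ le_rfl hδ ?_ le_rfl))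
      · intro x hx
        exact top_child hx
      · intro D T' Y c hc hD hT hT'
        change T' ⊆ T at hT
        change str D T' Y c ∈ S at hc
        change c ∈ G
        rcases D.eq_empty_or_nonempty with rfl | ⟨i, hi⟩
        · exact h1 c (hS.tmp (.monoS hT (Set.subset_univ _) le_rfl) hc)
        have hDC : D ⊆ C := by
          intro j hj
          by_contra hjC
          obtain ⟨q, hq, -⟩ := hD j hj
          simp [δ, hjC] at hq
        have hYX : Y ⊆ X := by
          intro y hy
          by_contra hyX
          obtain ⟨q, hq, hsim⟩ := hD i hi
          refine hb i c q hq ?_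
          have := hsim y hy
          have h3 : top y ((⟨X, b, T, S⟩ : Blk P V A) :: w.1)
              = (⟨X, b, T, S⟩ : Blk P V A) :: w.1 := by simp [top, hyX]
          rw [← h3]
          exact (congrArg (· <:+ q.1) this).mpr (top_suffix y q.1)
        have hc' : str D T X c ∈ S := hS.tmp (.monoS hT hYX le_rfl) hc
        have hc2 : bel T X (str D T X c) ∈ Fof R w.1 :=
          (edge hR hok le_rfl).2 (hS.tmp .strIntro₁ hc')
        refine h2 D hDC c (hm.tmp .strIntro₂ hc2) ?_
        intro j hj
        obtain ⟨q, hq, -⟩ := hD j hj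
        simp [f, hq]
    · intro h
      refine ⟨fun _ => some (a, w), ?_⟩
      intro u v δ hsim hTu hδ hM hTv
      rw [ih]
      have hu := (agree' hR w.2 u.2 hsim).1 (hm.tmp .strIntro₁ h)
      have hmu := Fof_mcs hR u.2
      refine hM C T X a (hmu.tmp .strIntro₂ hu) ?_ hTu hTv
      intro i hi
      exact ⟨w, (hδ i hi).symm, fun x hx => (hsim x hx).symm⟩

end SC

/-- Strong completeness: if F ⊬ φ then there is a game and a state w
with w ⊨ f for each f ∈ F and w ⊭ φ. -/
theorem strong_completeness {P V A : Type}
    (F : Set (Formula P V A)) (φ : Formula P V A) (h : ¬ Deduces F φ) :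
    ∃ (G : Game P V A) (w : G.W),
      (∀ f ∈ F, Sat G f w) ∧ ¬ Sat G φ w := by
  obtain ⟨R, hFR, hR, hφ⟩ := SC.lindenbaum h
  refine ⟨SC.cgame R, ⟨[], trivial⟩, ?_, ?_⟩
  · intro f hf
    exact (SC.truth_lemma hR f _).2 (hFR hf)
  · intro hs
    exact hφ ((SC.truth_lemma hR φ _).1 hs)
end

section
/- Positive Introspection: For any formula φ ∈ Φ, any coalition-free datasets T, X ⊆ V, the formula B^T_X φ → B^∅_X B^T_X φ is a theorem of the logical system, i.e. ⊢ B^T_X φ → B^∅_X B^T_X φ. -/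
variable {P V A : Type}

variable {B : Type}

attribute [local instance] Classical.propDecidable

/-- Positive Introspection: ⊢ B^T_X φ → B^∅_X B^T_X φ. -/
theorem positive_introspection {P V A : Type} (T X : Set V) (φ : Formula P V A) :
    Thm (Formula.imp (Formula.bel T X φ) (Formula.bel ∅ X (Formula.bel T X φ))) := by
  have contra : ∀ a b : Formula P V A, Thm (Formula.imp (Formula.neg a) b) →
      Thm (Formula.imp (Formula.neg b) a) := by
    intro a b h
    refine Thm.mp (Thm.taut ?_) h
    intro v hn hi
    simp only [hn, hi]
    tauto
  have contra2 : ∀ a b : Formula P V A, Thm (Formula.imp a (Formula.neg b)) →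
      Thm (Formula.imp b (Formula.neg a)) := by
    intro a b h
    refine Thm.mp (Thm.taut ?_) h
    intro v hn hi
    simp only [hn, hi]
    tauto
  have trans : ∀ a b c : Formula P V A, Thm (Formula.imp a b) → Thm (Formula.imp b c) →
      Thm (Formula.imp a c) := by
    intro a b c h1 h2
    refine Thm.mp (Thm.mp (Thm.taut ?_) h1) h2
    intro v hn hi
    simp only [hi]
    tauto
  have h4 := Thm.mp (Thm.monoB (Set.Subset.refl ∅) (Set.empty_subset X))
    (Thm.nec (contra _ _ (Thm.negIntro (T := T) (X := X) (φ := φ))))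
  exact trans _ _ _ (contra2 _ _ (Thm.truth (X := X)))
    (trans _ _ _ Thm.negIntro (Thm.mp Thm.distrib h4))
end

section
/- Single transfer lemma: In the canonical game, for any formula B^T_Y φ ∈ Φ and any two adjacent canonical states w' = T_0, F_0, …, b_{n−1}, T_{n−1}, F_{n−1} and w = T_0, F_0, …, b_{n−1}, T_{n−1}, F_{n−1}, X_n, b_n, T_n, F_n, if Y ⊆ X_n, then B^T_Y φ ∈ F(w') if and only if B^T_Y φ ∈ F(w). -/
variable {P V A : Type}

variable {B : Type}

attribute [local instance] Classical.propDecidable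

theorem Deduces.closed {F : Set (Formula P V A)} (hF : MaximalConsistent F)
    {φ : Formula P V A} (h : Deduces F φ) : φ ∈ F := by
  have key : ∀ ψ, Deduces (insert φ F) ψ → Deduces F ψ := by
    intro ψ hψ
    induction hψ with
    | thm h' => exact .thm h'
    | mem h' =>
      rcases h' with h' | h'
      · exact h' ▸ h
      · exact .mem h'
    | mp _ _ i j => exact .mp i j
  have hc : Consistent (insert φ F) := by
    rintro ⟨ψ, a, b⟩
    exact hF.1 ⟨ψ, key _ a, key _ b⟩
  have e := hF.2 _ hc (Set.subset_insert _ _)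
  rw [e]
  exact Set.mem_insert _ _

theorem Deduces.deduction {F : Set (Formula P V A)} {φ ψ : Formula P V A}
    (h : Deduces (insert φ F) ψ) : Deduces F (Formula.imp φ ψ) := by
  have k : ∀ χ : Formula P V A, Deduces F χ → Deduces F (Formula.imp φ χ) := by
    intro χ hχ
    refine .mp (.thm (.taut ?_)) hχ
    intro v hn hi
    simp only [hi]
    tauto
  induction h with
  | thm h' => exact k _ (.thm h')
  | mem h' =>
    rcases h' with h' | h'
    · subst h'
      refine .thm (.taut ?_)
      intro v hn hi
      simp only [hi]
      tauto
    · exact k _ (.mem h')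
  | mp _ _ i j =>
    refine .mp (.mp (.thm (.taut ?_)) i) j
    intro v hn hi
    simp only [hi]
    tauto

theorem MaximalConsistent.neg_mem {F : Set (Formula P V A)} (hF : MaximalConsistent F)
    {φ : Formula P V A} (h : φ ∉ F) : Formula.neg φ ∈ F := by
  have hc : ¬ Consistent (insert φ F) := by
    intro hc
    have e := hF.2 _ hc (Set.subset_insert _ _)
    apply h
    rw [e]
    exact Set.mem_insert _ _
  have hc' := not_not.mp hc
  obtain ⟨ψ, a, b⟩ := hc'
  refine Deduces.closed hF (.mp (.mp (.thm (.taut ?_)) a.deduction) b.deduction)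
  intro v hn hi
  simp only [hi, hn]
  tauto

theorem Thm.posIntro (T Y : Set V) (φ : Formula P V A) :
    Thm (Formula.imp (Formula.bel T Y φ) (Formula.bel ∅ Y (Formula.bel T Y φ))) := by
  have h1 := Thm.negIntro (T := T) (X := Y) (φ := φ)
  have h2 := Thm.truth (X := Y) (φ := Formula.neg (Formula.bel T Y φ))
  have h3 := Thm.negIntro (T := ∅) (X := Y) (φ := Formula.neg (Formula.bel T Y φ))
  have h4 : Thm (Formula.imp
      (Formula.neg (Formula.bel ∅ Y (Formula.neg (Formula.bel T Y φ))))
      (Formula.bel T Y φ)) := by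
    refine .mp (.taut ?_) h1
    intro v hn hi
    simp only [hi, hn]
    tauto
  have h5 := Thm.mp .distrib
    (Thm.mp (Thm.monoB (le_refl (∅ : Set V)) (Set.empty_subset Y)) (Thm.nec h4))
  refine .mp (.mp (.mp (.taut ?_) h2) h3) h5
  intro v hn hi
  simp only [hi, hn]
  tauto

theorem IsState.maximal {T0 : Set V} {F0 : Set (Formula P V A)}
    (hF0 : MaximalConsistent F0) {l : List (Block P V A B)} (h : IsState T0 F0 l) :
    MaximalConsistent (cF F0 l) := by
  cases h with
  | nil _ => simpa [cF] using hF0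
  | snoc _ h1 _ _ => simpa [cF] using h1

/-- Single transfer lemma: for adjacent canonical states
w' = T_0,F_0,…,T_{n-1},F_{n-1} and w = w', X_n, b_n, T_n, F_n, if Y ⊆ X_n then
B^T_Y φ ∈ F(w') iff B^T_Y φ ∈ F(w). -/
theorem single_transfer {P V A B : Type}
    (T0 : Set V) (F0 : Set (Formula P V A))
    (hF0 : MaximalConsistent F0) (hB : Cardinal.mk A < Cardinal.mk B)
    (l : List (Block P V A B)) (bl : Block P V A B)
    (hw' : IsState T0 F0 l) (hw : IsState T0 F0 (l ++ [bl]))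
    (T Y : Set V) (φ : Formula P V A) (hY : Y ⊆ bl.X) :
    Formula.bel T Y φ ∈ cF F0 l ↔ Formula.bel T Y φ ∈ cF F0 (l ++ [bl]) := by
  have hm' := hw'.maximal hF0
  have hm := hw.maximal hF0
  have step : ∀ ψ : Formula P V A, Formula.bel ∅ bl.X ψ ∈ cF F0 l →
      ψ ∈ cF F0 (l ++ [bl]) := by
    generalize e : l ++ [bl] = m at hw
    cases hw with
    | nil _ => simp at e
    | snoc _ _ h2 _ =>
      obtain ⟨rfl, e2⟩ := List.append_inj' e rfl
      obtain rfl := List.singleton_inj.mp e2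
      simpa [cF] using h2
  have up : ∀ ψ : Formula P V A, Formula.bel ∅ Y ψ ∈ cF F0 l →
      ψ ∈ cF F0 (l ++ [bl]) := fun ψ h =>
    step ψ (Deduces.closed hm' (.mp (.thm (.monoB (le_refl _) hY)) (.mem h)))
  constructor
  · intro h
    exact up _ (Deduces.closed hm' (.mp (.thm (Thm.posIntro T Y φ)) (.mem h)))
  · intro h
    by_contra hn
    have h1 := up _ (Deduces.closed hm' (.mp (.thm .negIntro) (.mem (hm'.neg_mem hn))))
    exact hm.1 ⟨_, .mem h, .mem h1⟩
end

section
/- Soundness of the Cooperation axiom: For any game, any state w, any formulae φ, ψ ∈ Φ, any datasets T, X ⊆ V, and any coalitions C, D ⊆ 𝒜, if w ⊨ [C]^T_X(φ→ψ), w ⊨ [D]^T_X φ, and C and D are disjoint, then w ⊨ [C∪D]^T_X ψ. -/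
variable {P V A : Type}

variable {B : Type}

attribute [local instance] Classical.propDecidable

/-- Soundness of the Cooperation axiom: if w ⊨ [C]^T_X(φ→ψ),
w ⊨ [D]^T_X φ, and C, D are disjoint, then w ⊨ [C∪D]^T_X ψ. -/
theorem cooperation_sound {P V A : Type} (G : Game P V A) (w : G.W)
    (φ ψ : Formula P V A) (T X : Set V) (C D : Set A)
    (h1 : Sat G (Formula.str C T X (Formula.imp φ ψ)) w)
    (h2 : Sat G (Formula.str D T X φ) w)
    (hCD : Disjoint C D) :
    Sat G (Formula.str (C ∪ D) T X ψ) w := by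
  simp only [Sat] at h1 h2 ⊢
  obtain ⟨s1, k1⟩ := h1
  obtain ⟨s2, k2⟩ := h2
  refine ⟨fun a => if h : a.1 ∈ C then s1 ⟨a.1, h⟩ else s2 ⟨a.1, a.2.resolve_left h⟩, ?_⟩
  intro u v δ hu hT hs hM hv
  refine k1 u v δ hu hT ?_ hM hv (k2 u v δ hu hT ?_ hM hv)
  · intro a h
    have := hs a (Or.inl h)
    beta_reduce at this
    rwa [dif_pos h] at this
  · intro a h
    have hn : a ∉ C := fun hc => Set.disjoint_left.mp hCD hc h
    have := hs a (Or.inr h)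
    beta_reduce at this
    rwa [dif_neg hn] at this
end
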